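/- arXiv:1910.03411 — 5 statements merged into one kernel-verified Lean document; each statement's English description precedes it below -/
import Mathlib

section
/- Let f : ℝ → ℝ be smooth, let q ∈ ℕ and let φ ∈ 𝒜_q(ℝ). Then for every ε > 0 and every x ∈ ℝ the following Taylor expansion with integral remainder holds: ∫_ℝ f(y) φ_ε(y − x) dy = f(x) + (ε^{q+1}/q!) ∫_ℝ ∫_0^1 y^{q+1} (1 − t)^q f^{(q+1)}(x + tεy) φ(y) dt dy. -/
open MeasureTheory Filter Topology

noncomputable section

namespace Colombeau

/-- `φ ∈ 𝒟(ℝⁿ)`: smooth compactly supported function. -/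
def IsTestFunction (n : ℕ) (φ : (Fin n → ℝ) → ℝ) : Prop :=
  ContDiff ℝ (⊤ : ℕ∞) φ ∧ HasCompactSupport φ

/-- `φ ∈ 𝒜₀(ℝⁿ)`: test function with integral one. -/
def IsA0 (n : ℕ) (φ : (Fin n → ℝ) → ℝ) : Prop :=
  IsTestFunction n φ ∧ ∫ x, φ x = 1

/-- `φ ∈ 𝒜_q(ℝⁿ)`: vanishing moments up to order `q`. -/
def IsAq (n q : ℕ) (φ : (Fin n → ℝ) → ℝ) : Prop :=
  IsA0 n φ ∧ ∀ i : Fin n → ℕ, 1 ≤ ∑ j, i j → ∑ j, i j ≤ q →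
    ∫ x, (∏ j, x j ^ i j) * φ x = 0

/-- the scaled mollifier `φ_ε(x) = ε⁻ⁿ φ(x/ε)`. -/
def scaled (n : ℕ) (φ : (Fin n → ℝ) → ℝ) (ε : ℝ) : (Fin n → ℝ) → ℝ :=
  fun x => (ε ^ n)⁻¹ * φ (ε⁻¹ • x)

/-- partial derivative `∂_i`. -/
def partialD {n : ℕ} (i : Fin n) (f : (Fin n → ℝ) → ℝ) : (Fin n → ℝ) → ℝ :=
  fun x => fderiv ℝ f x (Pi.single i 1)

/-- multi-index derivative `∂^k = ∂₁^{k₁} ⋯ ∂_n^{k_n}`. -/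
def multiD {n : ℕ} (k : Fin n → ℕ) (f : (Fin n → ℝ) → ℝ) : (Fin n → ℝ) → ℝ :=
  (List.finRange n).foldl (fun g i => (partialD i)^[k i] g) f

/-- Moderate functions of the basic space. -/
def Moderate (n : ℕ) (F : ((Fin n → ℝ) → ℝ) → (Fin n → ℝ) → ℝ) : Prop :=
  ∀ K : Set (Fin n → ℝ), IsCompact K → ∀ k : Fin n → ℕ,
    ∃ N : ℕ, ∀ φ, IsAq n N φ →
      ∃ C > 0, ∀ᶠ ε in 𝓝[>] (0:ℝ), ∀ x ∈ K,
        |multiD k (F (scaled n φ ε)) x| ≤ C * ε ^ (-(N:ℤ))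

/-- Negligible functions of the basic space. -/
def Negligible (n : ℕ) (F : ((Fin n → ℝ) → ℝ) → (Fin n → ℝ) → ℝ) : Prop :=
  ∀ K : Set (Fin n → ℝ), IsCompact K → ∀ k : Fin n → ℕ, ∀ m : ℕ,
    ∃ q : ℕ, ∀ φ, IsAq n q φ →
      ∃ C > 0, ∀ᶠ ε in 𝓝[>] (0:ℝ), ∀ x ∈ K,
        |multiD k (F (scaled n φ ε)) x| ≤ C * ε ^ m


/-- `φ ∈ 𝒜_q(ℝ)` (one-dimensional version). -/
def IsAqOne (q : ℕ) (φ : ℝ → ℝ) : Prop :=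
  (ContDiff ℝ (⊤ : ℕ∞) φ ∧ HasCompactSupport φ) ∧ (∫ x, φ x = 1) ∧
    ∀ i : ℕ, 1 ≤ i → i ≤ q → ∫ x, x ^ i * φ x = 0

/-- Derivative along a segment of the Taylor polynomial with moving base point. -/
theorem hasDerivAt_sum_taylor {f : ℝ → ℝ} (hf : ContDiff ℝ (⊤ : ℕ∞) f) (q : ℕ) (x h t : ℝ) :
    HasDerivAt
      (fun t => ∑ k ∈ Finset.range (q + 1),
        (1 - t) ^ k * h ^ k / k.factorial * iteratedDeriv k f (x + t * h))
      (h ^ (q + 1) * (1 - t) ^ q / q.factorial * iteratedDeriv (q + 1) f (x + t * h)) t := by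
  have hderiv (k : ℕ) : HasDerivAt (fun t => iteratedDeriv k f (x + t * h))
      (iteratedDeriv (k + 1) f (x + t * h) * h) t := by
    have hk : HasDerivAt (iteratedDeriv k f) (iteratedDeriv (k + 1) f (x + t * h)) (x + t * h) := by
      rw [iteratedDeriv_succ]
      exact ((hf.differentiable_iteratedDeriv k (by exact_mod_cast ENat.natCast_lt_top k))
        _).hasDerivAt
    have hline : HasDerivAt (fun t => x + t * h) h t := by
      simpa using ((hasDerivAt_id t).mul_const h).const_add x
    exact HasDerivAt.comp (h := fun t => x + t * h) t hk hline
  induction q with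
  | zero =>
    have := hderiv 0
    simpa [mul_comm] using this
  | succ q ih =>
    have hpow : HasDerivAt (fun t : ℝ => (1 - t) ^ (q + 1) * h ^ (q + 1) / (q + 1).factorial)
        (-((q + 1 : ℕ) * (1 - t) ^ q) * h ^ (q + 1) / (q + 1).factorial) t := by
      have := ((hasDerivAt_id t).const_sub 1).pow (q + 1)
      simpa using (this.mul_const (h ^ (q + 1))).div_const ((q + 1).factorial : ℝ)
    simp_rw [Finset.sum_range_succ _ (q + 1)]
    refine (ih.add (hpow.mul (hderiv (q + 1)))).congr_deriv ?_
    have : (q.factorial : ℝ) ≠ 0 := by positivity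
    rw [Nat.factorial_succ]
    push_cast
    field_simp
    ring

/-- Taylor's formula with the integral remainder over the unit interval. -/
theorem taylor_integral_remainder_unit {f : ℝ → ℝ} (hf : ContDiff ℝ (⊤ : ℕ∞) f) (q : ℕ)
    (x h : ℝ) :
    f (x + h) = ∑ k ∈ Finset.range (q + 1), h ^ k / k.factorial * iteratedDeriv k f x +
      h ^ (q + 1) / q.factorial *
        ∫ t in (0:ℝ)..1, (1 - t) ^ q * iteratedDeriv (q + 1) f (x + t * h) := by
  have hcont : Continuous (iteratedDeriv (q + 1) f) :=
    hf.continuous_iteratedDeriv (q + 1) (by exact_mod_cast le_top)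
  have hint := intervalIntegral.integral_eq_sub_of_hasDerivAt (a := 0) (b := 1)
    (fun t _ => hasDerivAt_sum_taylor hf q x h t)
    (Continuous.intervalIntegrable (by fun_prop) _ _)
  have hend : ∑ k ∈ Finset.range (q + 1),
      (1 - (1:ℝ)) ^ k * h ^ k / k.factorial * iteratedDeriv k f (x + 1 * h) = f (x + h) := by
    simp [Finset.sum_range_succ']
  rw [hend] at hint
  simp only [sub_zero, one_pow, one_mul, zero_mul, add_zero] at hint
  rw [← intervalIntegral.integral_const_mul, ← sub_eq_iff_eq_add', ← hint]
  congr 1 with t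
  ring

/-- Affine change of variables for the pairing with a rescaled mollifier. -/
theorem integral_mul_scaled (f φ : ℝ → ℝ) {ε : ℝ} (hε : 0 < ε) (x : ℝ) :
    ∫ y, f y * (ε⁻¹ * φ (ε⁻¹ * (y - x))) = ∫ y, f (x + ε * y) * φ y := by
  have hscale := Measure.integral_comp_mul_left (fun z => f (x + z) * φ (ε⁻¹ * z)) ε
  rw [← integral_add_left_eq_self _ x]
  simp only [inv_mul_cancel_left₀ hε.ne', abs_of_pos (inv_pos.2 hε), smul_eq_mul] at hscale
  rw [hscale, ← integral_const_mul]
  congr 1 with z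
  rw [add_sub_cancel_left]
  ring

/-- Taylor expansion with integral remainder for the smoothing of a
smooth function against a mollifier with vanishing moments up to order `q`. -/
theorem taylor_expansion_smoothing (f : ℝ → ℝ) (hf : ContDiff ℝ (⊤ : ℕ∞) f) (q : ℕ)
    (φ : ℝ → ℝ) (hφ : IsAqOne q φ) (ε : ℝ) (hε : 0 < ε) (x : ℝ) :
    ∫ y, f y * (ε⁻¹ * φ (ε⁻¹ * (y - x))) =
      f x + (ε ^ (q + 1) / q.factorial) *
        ∫ y, (∫ t in (0:ℝ)..1, y ^ (q + 1) * (1 - t) ^ q *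
          iteratedDeriv (q + 1) f (x + t * ε * y)) * φ y := by
  obtain ⟨⟨hφs, hφc⟩, hφ1, hφm⟩ := hφ
  have hintegrable {g : ℝ → ℝ} (hg : Continuous g) : Integrable (fun y => g y * φ y) :=
    (hg.mul hφs.continuous).integrable_of_hasCompactSupport hφc.mul_left
  have hpoly : ∫ y, (∑ k ∈ Finset.range (q + 1),
      (ε * y) ^ k / k.factorial * iteratedDeriv k f x) * φ y = f x := by
    simp_rw [Finset.sum_mul]
    rw [integral_finsetSum _ fun k _ => hintegrable (by fun_prop), Finset.sum_range_succ']
    have hzero : ∀ k ∈ Finset.range q, ∫ y, (ε * y) ^ (k + 1) / (k + 1).factorial *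
        iteratedDeriv (k + 1) f x * φ y = 0 := fun k hk => by
      have hmoment := hφm (k + 1) (by omega) (by have := Finset.mem_range.1 hk; omega)
      rw [← mul_zero (ε ^ (k + 1) / (k + 1).factorial * iteratedDeriv (k + 1) f x), ← hmoment,
        ← integral_const_mul]
      congr 1 with y
      ring
    rw [Finset.sum_eq_zero hzero]
    simp [integral_const_mul, hφ1]
  have hf' : Continuous f := hf.continuous
  rw [integral_mul_scaled f φ hε x, ← sub_eq_iff_eq_add', ← integral_const_mul]
  nth_rw 1 [← hpoly]
  rw [← integral_sub (hintegrable (by fun_prop)) (hintegrable (by fun_prop))]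
  congr 1 with y
  rw [taylor_integral_remainder_unit hf q x (ε * y)]
  simp_rw [mul_assoc (y ^ (q + 1)), intervalIntegral.integral_const_mul, mul_assoc _ ε y]
  ring

end Colombeau
end
end

section
/- Let n ∈ ℕ, let f : ℝⁿ → ℝ be smooth, let q ∈ ℕ, let φ ∈ 𝒜_q(ℝⁿ) and let K ⊂ ℝⁿ be compact. Then sup_{x ∈ K} |∫_{ℝⁿ} f(y) φ_ε(y − x) dy − f(x)| = O(ε^{q+1}) as ε → 0⁺. -/
open MeasureTheory Filter Topology

noncomputable section

namespace Colombeau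

/-- Substituting `y = x + ε z` in the smoothing integral. -/
theorem integral_mul_scaled_sub (n : ℕ) (f φ : (Fin n → ℝ) → ℝ) {ε : ℝ} (hε : 0 < ε)
    (x : Fin n → ℝ) :
    ∫ y, f y * scaled n φ ε (y - x) = ∫ z, f (x + ε • z) * φ z := by
  have translate := integral_add_left_eq_self (μ := volume)
    (fun y => f y * scaled n φ ε (y - x)) x
  have rescale := Measure.integral_comp_inv_smul_of_nonneg (volume : Measure (Fin n → ℝ))
    (fun z => f (x + ε • z) * φ z) hε.le
  rw [← translate]
  simp only [smul_inv_smul₀ hε.ne', Module.finrank_fintype_fun_eq_card, Fintype.card_fin,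
    smul_eq_mul] at rescale
  have pull_out : ∀ z, f (x + z) * scaled n φ ε (x + z - x) =
      (ε ^ n)⁻¹ * (f (x + z) * φ (ε⁻¹ • z)) := by
    intro z
    simp only [scaled, add_sub_cancel_left]
    ring
  simp_rw [pull_out]
  rw [integral_const_mul, rescale, inv_mul_cancel_left₀ (pow_pos hε n).ne']

/-- A homogeneous form on `ℝⁿ` expanded into monomials. -/
theorem multilinear_diagonal_eq_sum {n k : ℕ}
    (L : ContinuousMultilinearMap ℝ (fun _ : Fin k => Fin n → ℝ) ℝ) (z : Fin n → ℝ) :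
    L (fun _ => z) = ∑ r : Fin k → Fin n,
      L (fun i => Pi.single (r i) 1) * ∏ j, z j ^ (Finset.univ.filter fun i => r i = j).card := by
  have basis_expansion : (fun _ : Fin k => z) =
      fun _ => ∑ j, z j • (Pi.single j 1 : Fin n → ℝ) := by
    funext _
    exact pi_eq_sum_univ' z
  rw [basis_expansion, L.map_sum]
  refine Finset.sum_congr rfl fun r _ => ?_
  rw [L.map_smul_univ, smul_eq_mul, mul_comm]
  congr 1
  rw [← Finset.prod_fiberwise Finset.univ r (fun i => z (r i))]
  refine Finset.prod_congr rfl fun j _ => ?_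
  rw [Finset.prod_congr rfl fun i hi => by rw [(Finset.mem_filter.mp hi).2], Finset.prod_const]

theorem IsTestFunction.integrable_mul {n : ℕ} {φ g : (Fin n → ℝ) → ℝ} (hφ : IsTestFunction n φ)
    (hg : Continuous g) : Integrable fun z => g z * φ z :=
  (hg.mul hφ.1.continuous).integrable_of_hasCompactSupport hφ.2.mul_left

/-- Homogeneous forms of degree between `1` and `q` integrate to zero against `φ ∈ 𝒜_q`. -/
theorem IsAq.integral_multilinear_diagonal_mul {n q : ℕ} {φ : (Fin n → ℝ) → ℝ}
    (hφ : IsAq n q φ) {k : ℕ} (hk : 1 ≤ k) (hkq : k ≤ q)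
    (L : ContinuousMultilinearMap ℝ (fun _ : Fin k => Fin n → ℝ) ℝ) :
    ∫ z, L (fun _ => z) * φ z = 0 := by
  simp_rw [multilinear_diagonal_eq_sum L, Finset.sum_mul, mul_assoc]
  rw [integral_finsetSum]
  · refine Finset.sum_eq_zero fun r _ => ?_
    have degree : ∑ j, (Finset.univ.filter fun i => r i = j).card = k := by
      simpa using (Finset.card_eq_sum_card_fiberwise (s := Finset.univ) (t := Finset.univ)
        (f := r) (by simp)).symm
    rw [integral_const_mul, hφ.2 _ (by rwa [degree]) (by rwa [degree]), mul_zero]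
  · intro r _
    exact (hφ.1.1.integrable_mul (by fun_prop)).const_mul _

/-- The Taylor polynomial of order `q` of `f` at `x`, as a function of the increment. -/
def taylorSum {n : ℕ} (q : ℕ) (f : (Fin n → ℝ) → ℝ) (x y : Fin n → ℝ) : ℝ :=
  ∑ k ∈ Finset.range (q + 1), (k.factorial : ℝ)⁻¹ • iteratedFDeriv ℝ k f x (fun _ => y)

theorem continuous_taylorSum {n : ℕ} (q : ℕ) (f : (Fin n → ℝ) → ℝ) (x : Fin n → ℝ) :
    Continuous (taylorSum q f x) := by
  unfold taylorSum
  fun_prop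

/-- Smoothing with `φ ∈ 𝒜_q` reproduces the constant term of a Taylor polynomial. -/
theorem IsAq.integral_taylorSum_mul {n q : ℕ} {φ : (Fin n → ℝ) → ℝ} (hφ : IsAq n q φ)
    (f : (Fin n → ℝ) → ℝ) (x : Fin n → ℝ) (ε : ℝ) :
    ∫ z, taylorSum q f x (ε • z) * φ z = f x := by
  have expand : ∀ z, taylorSum q f x (ε • z) * φ z = ∑ k ∈ Finset.range (q + 1),
      ((k.factorial : ℝ)⁻¹ * ε ^ k) * (iteratedFDeriv ℝ k f x (fun _ => z) * φ z) := by
    intro z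
    rw [taylorSum, Finset.sum_mul]
    refine Finset.sum_congr rfl fun k _ => ?_
    rw [(iteratedFDeriv ℝ k f x).map_smul_univ (fun _ => ε) (fun _ => z)]
    simp only [Finset.prod_const, Finset.card_univ, Fintype.card_fin, smul_eq_mul]
    ring
  simp_rw [expand]
  rw [integral_finsetSum]
  · simp_rw [integral_const_mul]
    rw [Finset.sum_eq_single 0]
    · simp [integral_const_mul, hφ.1.2]
    · intro k hk hk0
      rw [hφ.integral_multilinear_diagonal_mul (Nat.one_le_iff_ne_zero.mpr hk0)
        (Nat.lt_succ_iff.mp (Finset.mem_range.mp hk)), mul_zero]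
    · simp
  · intro k _
    exact (hφ.1.1.integrable_mul (by fun_prop)).const_mul _

open scoped Pointwise in
/-- Taylor remainder bound, uniform in the base point over a compact set. -/
theorem exists_abs_sub_taylorSum_le {n : ℕ} {f : (Fin n → ℝ) → ℝ}
    (hf : ContDiff ℝ (⊤ : ℕ∞) f) (q : ℕ) {K : Set (Fin n → ℝ)} (hK : IsCompact K) (R : ℝ) :
    ∃ C, 0 ≤ C ∧ ∀ x ∈ K, ∀ y, ‖y‖ ≤ R →
      |f (x + y) - taylorSum q f x y| ≤ C * ‖y‖ ^ (q + 1) := by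
  have deriv_continuous : Continuous (iteratedFDeriv ℝ (q + 1) f) :=
    hf.continuous_iteratedFDeriv (by exact_mod_cast le_top)
  obtain ⟨M, hM⟩ := (hK.add (isCompact_closedBall (0 : Fin n → ℝ) R)).exists_bound_of_continuousOn
    deriv_continuous.continuousOn
  refine ⟨(q.factorial : ℝ)⁻¹ * max M 0, by positivity, fun x hx y hy => ?_⟩
  rw [map_add_eq_sum_add_integral_iteratedFDeriv (n := q) (x := x) (y := y) fun t _ =>
    (hf.of_le (by exact_mod_cast le_top)).contDiffAt, taylorSum, add_sub_cancel_left, smul_eq_mul,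
    abs_mul, abs_of_nonneg (by positivity), mul_assoc]
  gcongr
  rw [← Real.norm_eq_abs]
  refine (intervalIntegral.norm_integral_le_of_norm_le_const
    (C := max M 0 * ‖y‖ ^ (q + 1)) fun t ht => ?_).trans_eq (by simp)
  rw [Set.uIoc_of_le zero_le_one] at ht
  have mem : x + t • y ∈ K + Metric.closedBall 0 R := by
    refine Set.add_mem_add hx (mem_closedBall_zero_iff.mpr ?_)
    rw [norm_smul, Real.norm_of_nonneg ht.1.le]
    exact (mul_le_of_le_one_left (norm_nonneg y) ht.2).trans hy
  have weight : ‖(1 - t) ^ q‖ ≤ 1 := by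
    rw [norm_pow, Real.norm_of_nonneg (by linarith [ht.2])]
    exact pow_le_one₀ (by linarith [ht.2]) (by linarith [ht.1])
  rw [norm_smul]
  calc _ ≤ 1 * ‖iteratedFDeriv ℝ (q + 1) f (x + t • y) (fun _ => y)‖ := by gcongr
    _ ≤ ‖iteratedFDeriv ℝ (q + 1) f (x + t • y)‖ * ‖y‖ ^ (q + 1) := by
      simpa using (iteratedFDeriv ℝ (q + 1) f (x + t • y)).le_opNorm (fun _ => y)
    _ ≤ max M 0 * ‖y‖ ^ (q + 1) := by
      gcongr
      exact (hM _ mem).trans (le_max_left M 0)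

/-- for a smooth `f` and `φ ∈ 𝒜_q(ℝⁿ)`, the smoothing of `f` agrees with
`f` up to `O(ε^{q+1})`, uniformly on compact sets. -/
theorem smoothing_eq_up_to_order (n : ℕ) (f : (Fin n → ℝ) → ℝ) (hf : ContDiff ℝ (⊤ : ℕ∞) f)
    (q : ℕ) (φ : (Fin n → ℝ) → ℝ) (hφ : IsAq n q φ)
    (K : Set (Fin n → ℝ)) (hK : IsCompact K) :
    ∃ C > 0, ∀ᶠ ε in 𝓝[>] (0:ℝ), ∀ x ∈ K,
      |(∫ y, f y * scaled n φ ε (y - x)) - f x| ≤ C * ε ^ (q + 1) := by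
  have φ_test : IsTestFunction n φ := hφ.1.1
  obtain ⟨R, R_pos, hR⟩ := φ_test.2.isCompact.isBounded.exists_pos_norm_le
  obtain ⟨C, C_nonneg, hC⟩ := exists_abs_sub_taylorSum_le hf q hK R
  have φ_integrable : Integrable φ := φ_test.1.continuous.integrable_of_hasCompactSupport φ_test.2
  refine ⟨C * R ^ (q + 1) * (∫ z, |φ z|) + 1, by positivity, ?_⟩
  filter_upwards [Ioc_mem_nhdsGT (zero_lt_one' ℝ)] with ε hε x hx
  have ε_nonneg : 0 ≤ ε := hε.1.le
  have pointwise : ∀ z, ‖(f (x + ε • z) - taylorSum q f x (ε • z)) * φ z‖ ≤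
      C * (ε * R) ^ (q + 1) * |φ z| := by
    intro z
    by_cases hz : z ∈ tsupport φ
    · have scaled_le : ‖ε • z‖ ≤ ε * R := by
        rw [norm_smul, Real.norm_of_nonneg ε_nonneg]
        gcongr
        exact hR z hz
      rw [norm_mul, Real.norm_eq_abs, Real.norm_eq_abs]
      gcongr
      exact (hC x hx _ (scaled_le.trans (mul_le_of_le_one_left R_pos.le hε.2))).trans (by gcongr)
    · simp [image_eq_zero_of_notMem_tsupport hz]
  have f_continuous := hf.continuous
  have taylor_continuous := continuous_taylorSum q f x
  rw [integral_mul_scaled_sub n f φ hε.1 x, ← hφ.integral_taylorSum_mul f x ε,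
    ← integral_sub (φ_test.integrable_mul (by fun_prop)) (φ_test.integrable_mul (by fun_prop))]
  simp_rw [← sub_mul]
  calc _ ≤ ∫ z, C * (ε * R) ^ (q + 1) * |φ z| :=
        norm_integral_le_of_norm_le (φ_integrable.abs.const_mul _) (.of_forall pointwise)
    _ = C * R ^ (q + 1) * (∫ z, |φ z|) * ε ^ (q + 1) := by
        rw [integral_const_mul, mul_pow]
        ring
    _ ≤ (C * R ^ (q + 1) * (∫ z, |φ z|) + 1) * ε ^ (q + 1) := by
        gcongr
        exact le_add_of_nonneg_right zero_le_one

end Colombeau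
end
end

section
/- Let n ∈ ℕ and let f : ℝⁿ → ℝ be smooth. Then the difference between the two embeddings of f into the basic space is negligible; i.e., the map F(φ, x) := ∫_{ℝⁿ} f(y) φ(y − x) dy − f(x), defined for φ ∈ 𝒜₀(ℝⁿ) and x ∈ ℝⁿ, is negligible: for every compact K ⊂ ℝⁿ, every multi-index k and every m ∈ ℕ there is q ∈ ℕ such that for all φ ∈ 𝒜_q(ℝⁿ), sup_{x ∈ K} |∂_x^k F(φ_ε, x)| = O(ε^m) as ε → 0⁺. -/
open MeasureTheory Filter Topology

noncomputable section

namespace Colombeau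

/-- The difference `x ↦ ∫ g(y) ψ(y - x) dy - g(x)` of the two embeddings of `g`, at `ψ`. -/
def embeddingDiff {n : ℕ} (ψ g : (Fin n → ℝ) → ℝ) : (Fin n → ℝ) → ℝ :=
  fun x => (∫ y, g y * ψ (y - x)) - g x

theorem integral_mul_comp_sub {n : ℕ} (g ψ : (Fin n → ℝ) → ℝ) (x : Fin n → ℝ) :
    ∫ y, g y * ψ (y - x) = ∫ z, g (x + z) * ψ z := by
  rw [← integral_add_left_eq_self _ x]
  simp

theorem IsTestFunction.scaled {n : ℕ} {φ : (Fin n → ℝ) → ℝ} (hφ : IsTestFunction n φ) {ε : ℝ}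
    (hε : ε ≠ 0) : IsTestFunction n (scaled n φ ε) := by
  refine ⟨contDiff_const.mul (hφ.1.comp (contDiff_const_smul _)), ?_⟩
  exact (hφ.2.comp_smul (inv_ne_zero hε)).mul_left

theorem integral_mul_scaled_s4 {n : ℕ} (h φ : (Fin n → ℝ) → ℝ) {ε : ℝ} (hε : 0 < ε) :
    ∫ z, h z * scaled n φ ε z = ∫ z, h (ε • z) * φ z := by
  have key := Measure.integral_comp_inv_smul_of_nonneg (volume : Measure (Fin n → ℝ))
    (fun z => h (ε • z) * φ z) hε.le
  simp only [smul_inv_smul₀ hε.ne', Module.finrank_fin_fun, smul_eq_mul] at key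
  calc ∫ z, h z * scaled n φ ε z = ∫ z, (ε ^ n)⁻¹ * (h z * φ (ε⁻¹ • z)) := by
        congr 1 with z
        simp only [scaled]
        ring
    _ = ∫ z, h (ε • z) * φ z := by
        rw [integral_const_mul, key, inv_mul_cancel_left₀ (pow_pos hε n).ne']

theorem hasFDerivAt_integral_comp_add_mul {n : ℕ} {g ψ : (Fin n → ℝ) → ℝ} (hg : ContDiff ℝ 1 g)
    (hψ : Continuous ψ) (hψc : HasCompactSupport ψ) (x : Fin n → ℝ) :
    HasFDerivAt (fun x => ∫ z, g (x + z) * ψ z) (∫ z, ψ z • fderiv ℝ g (x + z)) x := by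
  have hg' : Continuous (fderiv ℝ g) := hg.continuous_fderiv one_ne_zero
  obtain ⟨M, hM⟩ := ((isCompact_closedBall x 1).prod hψc.isCompact).bddAbove_image
    (f := fun p : (Fin n → ℝ) × (Fin n → ℝ) => ‖fderiv ℝ g (p.1 + p.2)‖) (by fun_prop)
  have hgc : Continuous g := hg.continuous
  refine hasFDerivAt_integral_of_dominated_of_fderiv_le (s := Metric.closedBall x 1)
    (F' := fun x z => ψ z • fderiv ℝ g (x + z)) (bound := fun z => ‖ψ z‖ * M)
    (Metric.closedBall_mem_nhds x one_pos) ?_ ?_ ?_ ?_ ?_ ?_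
  · exact .of_forall fun y => Continuous.aestronglyMeasurable (by fun_prop)
  · exact Continuous.integrable_of_hasCompactSupport (by fun_prop) hψc.mul_left
  · exact Continuous.aestronglyMeasurable (by fun_prop)
  · refine .of_forall fun z y hy => ?_
    rw [norm_smul]
    by_cases hz : z ∈ tsupport ψ
    · have hMz : ‖fderiv ℝ g (y + z)‖ ≤ M := hM ⟨(y, z), ⟨hy, hz⟩, rfl⟩
      gcongr
    · simp [image_eq_zero_of_notMem_tsupport hz]
  · exact (hψ.norm.integrable_of_hasCompactSupport hψc.norm).mul_const M
  · refine .of_forall fun z y _ => ?_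
    exact ((hasFDerivAt_comp_add_right z).2
      ((hg.differentiable one_ne_zero) (y + z)).hasFDerivAt).mul_const (ψ z)

theorem partialD_embeddingDiff {n : ℕ} {g ψ : (Fin n → ℝ) → ℝ} (hg : ContDiff ℝ 1 g)
    (hψ : Continuous ψ) (hψc : HasCompactSupport ψ) (i : Fin n) :
    partialD i (embeddingDiff ψ g) = embeddingDiff ψ (partialD i g) := by
  ext x
  have hg' : Continuous (fderiv ℝ g) := hg.continuous_fderiv one_ne_zero
  have hd := (hasFDerivAt_integral_comp_add_mul hg hψ hψc x).sub
    ((hg.differentiable one_ne_zero) x).hasFDerivAt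
  have hint : Integrable (fun z => ψ z • fderiv ℝ g (x + z)) :=
    Continuous.integrable_of_hasCompactSupport (by fun_prop) hψc.smul_right
  have heq : embeddingDiff ψ g = (fun x => ∫ z, g (x + z) * ψ z) - g := by
    ext x
    simp only [embeddingDiff, integral_mul_comp_sub, Pi.sub_apply]
  rw [partialD, heq, hd.fderiv, embeddingDiff, integral_mul_comp_sub]
  simp [ContinuousLinearMap.integral_apply hint, partialD, mul_comm]

theorem contDiff_partialD {n : ℕ} {g : (Fin n → ℝ) → ℝ} (hg : ContDiff ℝ (⊤ : ℕ∞) g)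
    (i : Fin n) : ContDiff ℝ (⊤ : ℕ∞) (partialD i g) :=
  (hg.fderiv_right (m := (⊤ : ℕ∞)) (by simp)).clm_apply contDiff_const

theorem contDiff_iterate_partialD {n : ℕ} {g : (Fin n → ℝ) → ℝ} (hg : ContDiff ℝ (⊤ : ℕ∞) g)
    (i : Fin n) (j : ℕ) : ContDiff ℝ (⊤ : ℕ∞) ((partialD i)^[j] g) := by
  induction j generalizing g with
  | zero => exact hg
  | succ j ih => exact ih (contDiff_partialD hg i)

theorem contDiff_multiD {n : ℕ} {g : (Fin n → ℝ) → ℝ} (hg : ContDiff ℝ (⊤ : ℕ∞) g)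
    (k : Fin n → ℕ) : ContDiff ℝ (⊤ : ℕ∞) (multiD k g) := by
  unfold multiD
  induction List.finRange n generalizing g with
  | nil => exact hg
  | cons i l ih => exact ih (contDiff_iterate_partialD hg i (k i))

theorem iterate_partialD_embeddingDiff {n : ℕ} {g ψ : (Fin n → ℝ) → ℝ}
    (hg : ContDiff ℝ (⊤ : ℕ∞) g) (hψ : IsTestFunction n ψ) (i : Fin n) (j : ℕ) :
    (partialD i)^[j] (embeddingDiff ψ g) = embeddingDiff ψ ((partialD i)^[j] g) := by
  induction j generalizing g with
  | zero => rfl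
  | succ j ih =>
    rw [Function.iterate_succ_apply, Function.iterate_succ_apply,
      partialD_embeddingDiff (hg.of_le (by simp)) hψ.1.continuous hψ.2,
      ih (contDiff_partialD hg i)]

theorem multiD_embeddingDiff {n : ℕ} {g ψ : (Fin n → ℝ) → ℝ} (hg : ContDiff ℝ (⊤ : ℕ∞) g)
    (hψ : IsTestFunction n ψ) (k : Fin n → ℕ) :
    multiD k (embeddingDiff ψ g) = embeddingDiff ψ (multiD k g) := by
  unfold multiD
  induction List.finRange n generalizing g with
  | nil => rfl
  | cons i l ih =>
    rw [List.foldl_cons, List.foldl_cons, iterate_partialD_embeddingDiff hg hψ,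
      ih (contDiff_iterate_partialD hg i (k i))]

/-- Uniform Taylor remainder bound over a compact set of base points and bounded increments. -/
theorem exists_norm_sub_taylor_le {E : Type*} [NormedAddCommGroup E] [NormedSpace ℝ E]
    [ProperSpace E] {g : E → ℝ} (m : ℕ) (hg : ContDiff ℝ (m + 1) g) {K : Set E}
    (hK : IsCompact K) (R : ℝ) :
    ∃ C, 0 ≤ C ∧ ∀ x ∈ K, ∀ y, ‖y‖ ≤ R →
      ‖g (x + y) - ∑ j ∈ Finset.range (m + 1),
        (j.factorial : ℝ)⁻¹ • iteratedFDeriv ℝ j g x (fun _ => y)‖ ≤ C * ‖y‖ ^ (m + 1) := by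
  have hD : Continuous (iteratedFDeriv ℝ (m + 1) g) :=
    hg.continuous_iteratedFDeriv (m := m + 1) (by norm_cast)
  obtain ⟨M, hM⟩ := (hK.prod (isCompact_closedBall (0 : E) R)).bddAbove_image
    (f := fun p : E × E => ‖iteratedFDeriv ℝ (m + 1) g (p.1 + p.2)‖) (by fun_prop)
  refine ⟨(m.factorial : ℝ)⁻¹ * |M|, by positivity, fun x hx y hy => ?_⟩
  rw [map_add_eq_sum_add_integral_iteratedFDeriv (n := m) fun t _ => hg.contDiffAt,
    add_sub_cancel_left, norm_smul, norm_inv, Real.norm_natCast, mul_assoc]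
  gcongr
  have hle : ∀ t ∈ Set.uIoc (0 : ℝ) 1,
      ‖(1 - t) ^ m • iteratedFDeriv ℝ (m + 1) g (x + t • y) (fun _ => y)‖
        ≤ |M| * ‖y‖ ^ (m + 1) := by
    intro t ht
    rw [Set.uIoc_of_le zero_le_one] at ht
    have hty : ‖t • y‖ ≤ R := by
      rw [norm_smul, Real.norm_of_nonneg ht.1.le]
      exact (mul_le_of_le_one_left (norm_nonneg y) ht.2).trans hy
    have hMx : ‖iteratedFDeriv ℝ (m + 1) g (x + t • y)‖ ≤ |M| :=
      (hM (Set.mem_image_of_mem _ (Set.mk_mem_prod hx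
        (mem_closedBall_zero_iff.2 hty)))).trans (le_abs_self M)
    have hpow : ‖(1 - t) ^ m‖ ≤ 1 := by
      rw [norm_pow, Real.norm_of_nonneg (by linarith [ht.2])]
      exact pow_le_one₀ (by linarith [ht.2]) (by linarith [ht.1])
    have hop := (iteratedFDeriv ℝ (m + 1) g (x + t • y)).le_opNorm (fun _ => y)
    rw [Finset.prod_const, Finset.card_univ, Fintype.card_fin] at hop
    rw [norm_smul]
    calc _ ≤ 1 * (|M| * ‖y‖ ^ (m + 1)) := by gcongr; exact hop.trans (by gcongr)
      _ = _ := one_mul _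
  simpa using intervalIntegral.norm_integral_le_of_norm_le_const hle

/-- A homogeneous polynomial of degree `j` with `1 ≤ j ≤ q` integrates to zero against `𝒜_q`. -/
theorem IsAq.integral_multilinear_mul_eq_zero {n q : ℕ} {φ : (Fin n → ℝ) → ℝ} (hφ : IsAq n q φ)
    {j : ℕ} (hj : 1 ≤ j) (hjq : j ≤ q)
    (A : ContinuousMultilinearMap ℝ (fun _ : Fin j => Fin n → ℝ) ℝ) :
    ∫ z, A (fun _ => z) * φ z = 0 := by
  have hexp : ∀ z : Fin n → ℝ, A (fun _ => z) * φ z = ∑ r : Fin j → Fin n,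
      A (fun s => Pi.single (r s) 1) *
        ((∏ i, z i ^ (Finset.univ.filter fun s => r s = i).card) * φ z) := by
    intro z
    have hz : (fun _ : Fin j => z) = fun _ => ∑ i, z i • (Pi.single i 1 : Fin n → ℝ) := by
      ext s i
      simp [Finset.sum_apply, Pi.single_apply]
    rw [hz, A.map_sum, Finset.sum_mul]
    refine Finset.sum_congr rfl fun r _ => ?_
    rw [A.map_smul_univ (fun s => z (r s)) (fun s => Pi.single (r s) 1), smul_eq_mul,
      ← Finset.prod_fiberwise' Finset.univ r (fun i => z i)]
    simp only [Finset.prod_const]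
    ring
  simp_rw [hexp]
  have hcont : Continuous φ := hφ.1.1.1.continuous
  rw [integral_finsetSum]
  · refine Finset.sum_eq_zero fun r _ => ?_
    have hcard : ∑ i, (Finset.univ.filter fun s => r s = i).card = j := by
      simpa using (Finset.card_eq_sum_card_fiberwise (f := r) (s := Finset.univ)
        (t := Finset.univ) (by simp)).symm
    rw [integral_const_mul, hφ.2 _ (by omega) (by omega), mul_zero]
  · intro r _
    exact Continuous.integrable_of_hasCompactSupport (by fun_prop) hφ.1.1.2.mul_left.mul_left

/-- Order-`m` smallness of the difference of the embeddings at `φ_ε`, for `φ ∈ 𝒜_m`. -/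
theorem IsAq.exists_abs_embeddingDiff_scaled_le {n m : ℕ} {φ g : (Fin n → ℝ) → ℝ}
    (hφ : IsAq n m φ) (hg : ContDiff ℝ (m + 1) g) {K : Set (Fin n → ℝ)} (hK : IsCompact K) :
    ∃ C > 0, ∀ ε : ℝ, 0 < ε → ε ≤ 1 → ∀ x ∈ K,
      |embeddingDiff (scaled n φ ε) g x| ≤ C * ε ^ m := by
  obtain ⟨⟨⟨hsmooth, hsupp⟩, hone⟩, -⟩ := id hφ
  have hcont : Continuous φ := hsmooth.continuous
  have hgc : Continuous g := hg.continuous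
  obtain ⟨R, hR⟩ := hsupp.isCompact.exists_bound_of_continuousOn continuousOn_id
  obtain ⟨C, hC, hbound⟩ := exists_norm_sub_taylor_le m hg hK |R|
  set P : (Fin n → ℝ) → (Fin n → ℝ) → ℝ := fun x y => ∑ j ∈ Finset.range (m + 1),
    (j.factorial : ℝ)⁻¹ • iteratedFDeriv ℝ j g x (fun _ => y) with hP
  have hnorm : Integrable fun z => ‖φ z‖ := hcont.norm.integrable_of_hasCompactSupport hsupp.norm
  refine ⟨C * |R| ^ (m + 1) * (∫ z, ‖φ z‖) + 1, by positivity, fun ε hε hε1 x hx => ?_⟩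
  have hPint : ∫ z, P x (ε • z) * φ z = g x := by
    have hterm : ∀ j : ℕ, ∀ z : Fin n → ℝ,
        ((j.factorial : ℝ)⁻¹ • iteratedFDeriv ℝ j g x (fun _ => ε • z)) * φ z =
          ((j.factorial : ℝ)⁻¹ * ε ^ j) * (iteratedFDeriv ℝ j g x (fun _ => z) * φ z) := by
      intro j z
      rw [(iteratedFDeriv ℝ j g x).map_smul_univ (fun _ => ε) (fun _ => z)]
      simp only [Finset.prod_const, Finset.card_univ, Fintype.card_fin, smul_eq_mul]
      ring
    simp_rw [hP, Finset.sum_mul, hterm]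
    rw [integral_finsetSum, Finset.sum_range_succ', Finset.sum_eq_zero, zero_add]
    · simp [integral_const_mul, hone]
    · intro j hj
      rw [integral_const_mul, hφ.integral_multilinear_mul_eq_zero (by omega)
        (by have := Finset.mem_range.1 hj; omega), mul_zero]
    · intro j _
      exact Continuous.integrable_of_hasCompactSupport (by fun_prop) hsupp.mul_left.mul_left
  have hdiff : embeddingDiff (scaled n φ ε) g x = ∫ z, (g (x + ε • z) - P x (ε • z)) * φ z := by
    rw [embeddingDiff, integral_mul_comp_sub, integral_mul_scaled_s4 (fun z => g (x + z)) φ hε,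
      ← hPint, ← integral_sub]
    · simp_rw [sub_mul]
    · exact Continuous.integrable_of_hasCompactSupport (by fun_prop) hsupp.mul_left
    · exact Continuous.integrable_of_hasCompactSupport (by fun_prop) hsupp.mul_left
  have hpt : ∀ z, ‖(g (x + ε • z) - P x (ε • z)) * φ z‖ ≤
      (C * |R| ^ (m + 1) * ε ^ m) * ‖φ z‖ := by
    intro z
    by_cases hz : z ∈ tsupport φ
    · rw [norm_mul]
      have hzR : ‖z‖ ≤ |R| := (hR z hz).trans (le_abs_self R)
      have hεz : ‖ε • z‖ = ε * ‖z‖ := by rw [norm_smul, Real.norm_of_nonneg hε.le]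
      gcongr
      calc ‖g (x + ε • z) - P x (ε • z)‖ ≤ C * ‖ε • z‖ ^ (m + 1) := by
            refine hbound x hx _ ?_
            rw [hεz]
            exact (mul_le_of_le_one_left (norm_nonneg z) hε1).trans hzR
        _ = C * ‖z‖ ^ (m + 1) * ε ^ (m + 1) := by rw [hεz]; ring
        _ ≤ C * |R| ^ (m + 1) * ε ^ m :=
            mul_le_mul (by gcongr) (pow_le_pow_of_le_one hε.le hε1 m.le_succ)
              (by positivity) (by positivity)
    · simp [image_eq_zero_of_notMem_tsupport hz]
  calc |embeddingDiff (scaled n φ ε) g x|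
      ≤ ∫ z, (C * |R| ^ (m + 1) * ε ^ m) * ‖φ z‖ := by
        rw [hdiff]
        exact norm_integral_le_of_norm_le (hnorm.const_mul _) (.of_forall hpt)
    _ = C * |R| ^ (m + 1) * (∫ z, ‖φ z‖) * ε ^ m := by rw [integral_const_mul]; ring
    _ ≤ (C * |R| ^ (m + 1) * (∫ z, ‖φ z‖) + 1) * ε ^ m := by gcongr; linarith

/-- for smooth `f`, the difference `ι(f) - σ(f)` of the two embeddings
into the basic space is negligible. -/
theorem embeddings_of_smooth_coincide (n : ℕ) (f : (Fin n → ℝ) → ℝ)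
    (hf : ContDiff ℝ (⊤ : ℕ∞) f) :
    Negligible n (fun φ x => (∫ y, f y * φ (y - x)) - f x) := by
  intro K hK k m
  refine ⟨m, fun φ hφ => ?_⟩
  obtain ⟨C, hC, hbound⟩ := hφ.exists_abs_embeddingDiff_scaled_le
    ((contDiff_multiD hf k).of_le (by exact_mod_cast le_top)) hK
  refine ⟨C, hC, ?_⟩
  filter_upwards [Ioc_mem_nhdsGT (zero_lt_one' ℝ)] with ε hε x hx
  have hcomm := multiD_embeddingDiff hf (hφ.1.1.scaled hε.1.ne') k
  exact (congrArg abs (congrFun hcomm x)).trans_le (hbound ε hε.1 hε.2 x hx)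

end Colombeau
end
end

section
/- Let n ∈ ℕ, let f : ℝⁿ → ℝ be continuous, let φ ∈ 𝒟(ℝⁿ), let k and l be multi-indices and let K ⊂ ℝⁿ be compact. Then the smoothing of the distributional derivative ∂^l f satisfies the moderateness estimate sup_{x ∈ K} | ε^{−n−|l|−|k|} ∫_{ℝⁿ} f(y) (∂^{k+l} φ)((y − x)/ε) dy | = O(ε^{−|l|−|k|}) as ε → 0⁺. (Here ε^{−n−|l|−|k|} (∂^{k+l}φ)((y−x)/ε) is, up to sign, ∂_y^l ∂_x^k applied to the translated scaled mollifier φ_ε(y − x).) -/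
open MeasureTheory Filter Topology

noncomputable section

namespace Colombeau

/-- Partial derivatives of test functions are test functions. -/
lemma IsTestFunction.partialD {n : ℕ} {φ : (Fin n → ℝ) → ℝ} (hφ : IsTestFunction n φ)
    (i : Fin n) : IsTestFunction n (partialD i φ) :=
  ⟨(hφ.1.fderiv_right (m := (⊤ : ℕ∞)) (by simp)).clm_apply contDiff_const,
    hφ.2.fderiv_apply (𝕜 := ℝ) (Pi.single i 1)⟩

/-- Multi-index derivatives of test functions are test functions. -/
lemma IsTestFunction.multiD {n : ℕ} {φ : (Fin n → ℝ) → ℝ} (hφ : IsTestFunction n φ)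
    (k : Fin n → ℕ) : IsTestFunction n (multiD k φ) :=
  List.foldlRecOn _ _ hφ fun _ hg i _ =>
    Function.Iterate.rec (IsTestFunction n) hg (fun _ h => h.partialD i) (k i)

/-- The change of variables `y = x + ε z`. -/
lemma integral_mul_comp_inv_smul_sub {n : ℕ} (f ψ : (Fin n → ℝ) → ℝ) (x : Fin n → ℝ)
    {ε : ℝ} (hε : 0 < ε) :
    ∫ y, f y * ψ (ε⁻¹ • (y - x)) = ε ^ n * ∫ z, f (x + ε • z) * ψ z := by
  have hshift := integral_sub_right_eq_self (μ := volume)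
    (fun y => f (x + y) * ψ (ε⁻¹ • y)) x
  have hscale := Measure.integral_comp_inv_smul_of_nonneg (volume : Measure (Fin n → ℝ))
    (fun z => f (x + ε • z) * ψ z) hε.le
  simp only [add_sub_cancel] at hshift
  simpa [smul_inv_smul₀ hε.ne', hshift] using hscale

/-- Smoothing a continuous function by scaled copies of a compactly supported continuous
function is bounded on compact sets, uniformly in the scale `ε ∈ [0, 1]`. -/
lemma exists_bound_integral_comp_add_smul {n : ℕ} {f ψ : (Fin n → ℝ) → ℝ}
    (hf : Continuous f) (hψ : Continuous ψ) (hψc : HasCompactSupport ψ)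
    {K : Set (Fin n → ℝ)} (hK : IsCompact K) :
    ∃ C > 0, ∀ ε ∈ Set.Icc (0 : ℝ) 1, ∀ x ∈ K, |∫ z, f (x + ε • z) * ψ z| ≤ C := by
  obtain ⟨M, hM⟩ := ((isCompact_Icc (a := (0 : ℝ)) (b := 1)).prod
    (hK.prod hψc)).exists_bound_of_continuousOn
      (f := fun p : ℝ × (Fin n → ℝ) × (Fin n → ℝ) => f (p.2.1 + p.1 • p.2.2))
      (by fun_prop)
  have hint : Integrable (fun z => |M| * |ψ z|) :=
    ((hψ.integrable_of_hasCompactSupport hψc).abs).const_mul _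
  have hnonneg : 0 ≤ ∫ z, |M| * |ψ z| := integral_nonneg fun z => by positivity
  refine ⟨(∫ z, |M| * |ψ z|) + 1, by positivity, fun ε hε x hx => ?_⟩
  refine le_add_of_le_of_nonneg ?_ zero_le_one
  refine norm_integral_le_of_norm_le (f := fun z => f (x + ε • z) * ψ z) hint
    (.of_forall fun z => ?_)
  rw [norm_mul, Real.norm_eq_abs (ψ z)]
  by_cases hz : z ∈ tsupport ψ
  · exact mul_le_mul_of_nonneg_right
      ((hM (ε, x, z) ⟨hε, hx, hz⟩).trans (le_abs_self M)) (abs_nonneg _)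
  · simp [image_eq_zero_of_notMem_tsupport hz]

/-- moderateness estimate for the smoothing of the distributional
derivative `∂^l f` of a continuous function `f`. -/
theorem embedding_of_derivative_moderate (n : ℕ) (f : (Fin n → ℝ) → ℝ)
    (hf : Continuous f) (φ : (Fin n → ℝ) → ℝ) (hφ : IsTestFunction n φ)
    (k l : Fin n → ℕ) (K : Set (Fin n → ℝ)) (hK : IsCompact K) :
    ∃ C > 0, ∀ᶠ ε in 𝓝[>] (0:ℝ), ∀ x ∈ K,
      |(ε ^ (n + (∑ j, l j) + (∑ j, k j)))⁻¹ *
          ∫ y, f y * multiD (k + l) φ (ε⁻¹ • (y - x))| ≤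
        C * ε ^ (-(((∑ j, l j) + (∑ j, k j) : ℕ) : ℤ)) := by
  have hψ := hφ.multiD (k + l)
  obtain ⟨C, hC, hbound⟩ := exists_bound_integral_comp_add_smul hf hψ.1.continuous hψ.2 hK
  refine ⟨C, hC, ?_⟩
  filter_upwards [Ioc_mem_nhdsGT (zero_lt_one (α := ℝ))] with ε hε x hx
  have hpos : 0 < ε := hε.1
  rw [integral_mul_comp_inv_smul_sub f _ x hpos, add_assoc, pow_add, mul_inv_rev, mul_assoc,
    inv_mul_cancel_left₀ (pow_pos hpos n).ne', abs_mul, abs_of_pos (by positivity), zpow_neg,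
    zpow_natCast, mul_comm]
  exact mul_le_mul_of_nonneg_right (hbound ε ⟨hpos.le, hε.2⟩ x hx) (by positivity)

end Colombeau
end
end

section
/- Let n ∈ ℕ, let u : ℝⁿ → ℝ be locally integrable, let X : ℝⁿ → ℝⁿ be a smooth vector field and let φ ∈ 𝒜₀(ℝⁿ). Then for every Ψ ∈ 𝒟(ℝⁿ), lim_{ε → 0⁺} ∫_{ℝⁿ} ( Σ_{a=1}^n X_a(x) ∂_{x_a} ũ(φ_ε, x) ) Ψ(x) dx = − ∫_{ℝⁿ} u(x) Σ_{a=1}^n ∂_a (X_a Ψ)(x) dx; that is, the Lie derivative along X of the embedding of the regular distribution u is associated to the embedding of the distributional Lie derivative L_X u. -/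
open MeasureTheory Filter Topology

noncomputable section

namespace Colombeau

open scoped Pointwise in
/-- Fubini for the regularization of a locally integrable function, tested against `g`. -/
theorem integral_smoothing_mul {n : ℕ} {u h g : (Fin n → ℝ) → ℝ} (hu : LocallyIntegrable u)
    (hh : Continuous h) (hhc : HasCompactSupport h) (hg : Continuous g)
    (hgc : HasCompactSupport g) :
    ∫ x, (∫ y, u y * h (y - x)) * g x = ∫ y, u y * ∫ x, h (y - x) * g x := by
  set K : Set (Fin n → ℝ) := tsupport h + tsupport g
  have hK : IsCompact K := hhc.isCompact.add hgc.isCompact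
  have huK : Integrable (K.indicator u) :=
    (hu.integrableOn_isCompact hK).integrable_indicator hK.measurableSet
  obtain ⟨C, hC⟩ := hhc.exists_bound_of_continuous hh
  have hint : Integrable (Function.uncurry fun x y : Fin n → ℝ => u y * h (y - x) * g x)
      (volume.prod volume) := by
    have hmeas : AEStronglyMeasurable (fun z : (Fin n → ℝ) × (Fin n → ℝ) => h (z.2 - z.1))
        (volume.prod volume) := (by fun_prop : Continuous _).aestronglyMeasurable
    refine (((hg.integrable_of_hasCompactSupport hgc).mul_prod huK).bdd_mul (c := C) hmeas
      (Eventually.of_forall fun z => hC _)).congr (Eventually.of_forall ?_)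
    rintro ⟨x, y⟩
    simp only [Function.uncurry]
    by_cases hy : y ∈ K
    · rw [Set.indicator_of_mem hy]
      ring
    · have : h (y - x) * g x = 0 := by
        by_contra hne
        refine hy ⟨y - x, subset_tsupport h (left_ne_zero_of_mul hne), x,
          subset_tsupport g (right_ne_zero_of_mul hne), sub_add_cancel y x⟩
      rw [Set.indicator_of_notMem hy, mul_assoc (u y), this]
      simp
  calc ∫ x, (∫ y, u y * h (y - x)) * g x = ∫ x, ∫ y, u y * h (y - x) * g x := by
        simp_rw [integral_mul_const]
    _ = ∫ y, ∫ x, u y * h (y - x) * g x := integral_integral_swap hint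
    _ = ∫ y, u y * ∫ x, h (y - x) * g x := by simp_rw [mul_assoc, integral_const_mul]

theorem continuous_scaled {n : ℕ} {φ : (Fin n → ℝ) → ℝ} (hφ : Continuous φ) (ε : ℝ) :
    Continuous (scaled n φ ε) := by
  unfold scaled
  fun_prop

theorem contDiff_scaled {n : ℕ} {φ : (Fin n → ℝ) → ℝ} {k : WithTop ℕ∞} (hφ : ContDiff ℝ k φ)
    (ε : ℝ) : ContDiff ℝ k (scaled n φ ε) := by
  unfold scaled
  fun_prop

theorem hasCompactSupport_scaled {n : ℕ} {φ : (Fin n → ℝ) → ℝ} (hφ : HasCompactSupport φ)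
    {ε : ℝ} (hε : ε ≠ 0) : HasCompactSupport (scaled n φ ε) :=
  (hφ.comp_smul (inv_ne_zero hε)).mul_left

theorem integral_scaled_sub_mul {n : ℕ} (φ g : (Fin n → ℝ) → ℝ) {ε : ℝ} (hε : 0 < ε)
    (y : Fin n → ℝ) :
    ∫ x, scaled n φ ε (y - x) * g x = ∫ w, φ w * g (y - ε • w) := by
  have hn : ε ^ n ≠ 0 := (pow_pos hε n).ne'
  calc ∫ x, scaled n φ ε (y - x) * g x
      = ∫ v, scaled n φ ε v * g (y - v) := by
        rw [← integral_sub_left_eq_self (fun v => scaled n φ ε v * g (y - v)) volume y]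
        simp
    _ = ∫ v, (ε ^ n)⁻¹ * (fun w => φ w * g (y - ε • w)) (ε⁻¹ • v) := by
        simp [scaled, mul_assoc, smul_smul, hε.ne']
    _ = ∫ w, φ w * g (y - ε • w) := by
        rw [integral_const_mul, Measure.integral_comp_inv_smul volume
          (fun w => φ w * g (y - ε • w)), Module.finrank_fin_fun,
          abs_of_pos (pow_pos hε n), smul_eq_mul, inv_mul_cancel_left₀ hn]

theorem tendsto_integral_mul_comp_sub_smul {n : ℕ} {φ g : (Fin n → ℝ) → ℝ} (hφ : Continuous φ)
    (hφc : HasCompactSupport φ) (hφ1 : ∫ x, φ x = 1) (hg : Continuous g)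
    (hgc : HasCompactSupport g) (y : Fin n → ℝ) :
    Tendsto (fun ε : ℝ => ∫ w, φ w * g (y - ε • w)) (𝓝[>] 0) (𝓝 (g y)) := by
  obtain ⟨C, hC⟩ := hgc.exists_bound_of_continuous hg
  have hlim : ∫ w, φ w * g y = g y := by rw [integral_mul_const, hφ1, one_mul]
  rw [← hlim]
  refine tendsto_integral_filter_of_dominated_convergence (fun w => ‖φ w‖ * C)
    (Eventually.of_forall fun ε => (by fun_prop : Continuous _).aestronglyMeasurable)
    (Eventually.of_forall fun ε => Eventually.of_forall fun w => ?_)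
    ((hφ.integrable_of_hasCompactSupport hφc).norm.mul_const C)
    (Eventually.of_forall fun w => ?_)
  · rw [norm_mul]
    gcongr
    exact hC _
  · have hcont : Continuous fun ε : ℝ => φ w * g (y - ε • w) := by fun_prop
    simpa using (hcont.tendsto 0).mono_left nhdsWithin_le_nhds

open scoped Pointwise in
/-- The regularization of a locally integrable function converges to it weakly. -/
theorem tendsto_integral_smoothing_mul {n : ℕ} {u φ g : (Fin n → ℝ) → ℝ}
    (hu : LocallyIntegrable u) (hφ : Continuous φ) (hφc : HasCompactSupport φ)
    (hφ1 : ∫ x, φ x = 1) (hg : Continuous g) (hgc : HasCompactSupport g) :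
    Tendsto (fun ε : ℝ => ∫ x, (∫ y, u y * scaled n φ ε (y - x)) * g x) (𝓝[>] 0)
      (𝓝 (∫ x, u x * g x)) := by
  have hev : (fun ε : ℝ => ∫ y, u y * ∫ w, φ w * g (y - ε • w)) =ᶠ[𝓝[>] 0]
      fun ε : ℝ => ∫ x, (∫ y, u y * scaled n φ ε (y - x)) * g x := by
    filter_upwards [self_mem_nhdsWithin] with ε (hε : 0 < ε)
    rw [integral_smoothing_mul hu (continuous_scaled hφ ε)
      (hasCompactSupport_scaled hφc hε.ne') hg hgc]
    simp_rw [integral_scaled_sub_mul φ g hε]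
  refine Tendsto.congr' hev ?_
  obtain ⟨C, hC⟩ := hgc.exists_bound_of_continuous hg
  set K : Set (Fin n → ℝ) :=
    (fun p : ℝ × (Fin n → ℝ) => p.1 • p.2) '' (Set.Icc 0 1 ×ˢ tsupport φ) + tsupport g
  have hK : IsCompact K :=
    ((isCompact_Icc.prod hφc.isCompact).image (by fun_prop)).add hgc.isCompact
  have huK : Integrable (K.indicator u) :=
    (hu.integrableOn_isCompact hK).integrable_indicator hK.measurableSet
  have hφi : Integrable φ := hφ.integrable_of_hasCompactSupport hφc
  have hmem : ∀ᶠ ε in 𝓝[>] (0 : ℝ), ε ∈ Set.Ioc (0 : ℝ) 1 := Ioc_mem_nhdsGT one_pos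
  refine tendsto_integral_filter_of_dominated_convergence
    (fun y => ‖K.indicator u y‖ * ((∫ w, ‖φ w‖) * C)) (Eventually.of_forall fun ε => ?_) ?_
    (huK.norm.mul_const _) (Eventually.of_forall fun y => ?_)
  · refine hu.aestronglyMeasurable.mul (AEStronglyMeasurable.integral_prod_right'
      (f := fun p : (Fin n → ℝ) × (Fin n → ℝ) => φ p.2 * g (p.1 - ε • p.2)) ?_)
    exact (by fun_prop : Continuous _).aestronglyMeasurable
  · filter_upwards [hmem] with ε hε
    refine Eventually.of_forall fun y => ?_
    by_cases hy : y ∈ K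
    · rw [norm_mul, Set.indicator_of_mem hy, ← integral_mul_const]
      gcongr
      refine norm_integral_le_of_norm_le (hφi.norm.mul_const C) (Eventually.of_forall fun w => ?_)
      rw [norm_mul]
      gcongr
      exact hC _
    · have hzero : ∀ w, φ w * g (y - ε • w) = 0 := by
        intro w
        by_contra hne
        exact hy ⟨ε • w, ⟨(ε, w), ⟨⟨hε.1.le, hε.2⟩,
          subset_tsupport φ (left_ne_zero_of_mul hne)⟩, rfl⟩, y - ε • w,
          subset_tsupport g (right_ne_zero_of_mul hne), add_sub_cancel _ y⟩
      simp [hzero, hy]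
  · exact (tendsto_integral_mul_comp_sub_smul hφ hφc hφ1 hg hgc y).const_mul (u y)

theorem contDiff_smoothing {n : ℕ} {u h : (Fin n → ℝ) → ℝ} {k : ℕ∞} (hu : LocallyIntegrable u)
    (hh : ContDiff ℝ k h) (hhc : HasCompactSupport h) :
    ContDiff ℝ k fun z => ∫ y, u y * h (y - z) := by
  have hc : HasCompactSupport fun v => h (-v) := hhc.comp_homeomorph (Homeomorph.neg _)
  convert hc.contDiff_convolution_right (ContinuousLinearMap.mul ℝ ℝ) hu (hh.comp contDiff_neg)
    using 2 with z
  simp [convolution_def]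

theorem continuous_partialD {n : ℕ} (a : Fin n) {f : (Fin n → ℝ) → ℝ} (hf : ContDiff ℝ 1 f) :
    Continuous (partialD a f) :=
  (hf.continuous_fderiv one_ne_zero).clm_apply continuous_const

theorem hasCompactSupport_partialD {n : ℕ} (a : Fin n) {f : (Fin n → ℝ) → ℝ}
    (hf : HasCompactSupport f) : HasCompactSupport (partialD a f) :=
  hf.fderiv_apply ℝ _

theorem integral_sum_mul_partialD_mul {n : ℕ} {v Ψ : (Fin n → ℝ) → ℝ}
    {X : (Fin n → ℝ) → Fin n → ℝ} (hv : ContDiff ℝ 1 v) (hX : ContDiff ℝ 1 X)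
    (hΨ : ContDiff ℝ 1 Ψ) (hΨc : HasCompactSupport Ψ) :
    ∫ x, (∑ a, X x a * partialD a v x) * Ψ x =
      -∫ x, v x * ∑ a, partialD a (fun z => X z a * Ψ z) x := by
  have hXΨ (a : Fin n) : ContDiff ℝ 1 fun z => X z a * Ψ z := (contDiff_pi.1 hX a).mul hΨ
  have hXΨc (a : Fin n) : HasCompactSupport fun z => X z a * Ψ z := hΨc.mul_left
  have hleft (a : Fin n) : Integrable fun x => partialD a v x * (X x a * Ψ x) :=
    ((continuous_partialD a hv).mul (hXΨ a).continuous).integrable_of_hasCompactSupport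
      (hXΨc a).mul_left
  have hright (a : Fin n) : Integrable fun x => v x * partialD a (fun z => X z a * Ψ z) x :=
    (hv.continuous.mul (continuous_partialD a (hXΨ a))).integrable_of_hasCompactSupport
      (hasCompactSupport_partialD a (hXΨc a)).mul_left
  have hprod (a : Fin n) : Integrable fun x => v x * (X x a * Ψ x) :=
    (hv.continuous.mul (hXΨ a).continuous).integrable_of_hasCompactSupport (hXΨc a).mul_left
  have hparts (a : Fin n) : ∫ x, partialD a v x * (X x a * Ψ x) =
      -∫ x, v x * partialD a (fun z => X z a * Ψ z) x := by
    rw [eq_neg_iff_add_eq_zero, add_comm, ← eq_neg_iff_add_eq_zero]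
    exact integral_mul_fderiv_eq_neg_fderiv_mul_of_integrable (hleft a) (hright a) (hprod a)
      (fun x _ => hv.differentiable one_ne_zero x)
      (fun x _ => (hXΨ a).differentiable one_ne_zero x)
  have hrw (x : Fin n → ℝ) : (∑ a, X x a * partialD a v x) * Ψ x =
      ∑ a, partialD a v x * (X x a * Ψ x) := by
    rw [Finset.sum_mul]
    exact Finset.sum_congr rfl fun a _ => by ring
  simp_rw [hrw, Finset.mul_sum]
  rw [integral_finsetSum _ fun a _ => hleft a, integral_finsetSum _ fun a _ => hright a,
    ← Finset.sum_neg_distrib]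
  exact Finset.sum_congr rfl fun a _ => hparts a

/-- the Lie derivative along a smooth vector field `X` of the embedding
of a regular distribution `u` is associated to the embedding of the distributional
Lie derivative `L_X u`. -/
theorem lie_derivative_associated (n : ℕ) (u : (Fin n → ℝ) → ℝ)
    (hu : LocallyIntegrable u) (X : (Fin n → ℝ) → (Fin n → ℝ)) (hX : ContDiff ℝ (⊤ : ℕ∞) X)
    (φ : (Fin n → ℝ) → ℝ) (hφ : IsA0 n φ)
    (Ψ : (Fin n → ℝ) → ℝ) (hΨ : IsTestFunction n Ψ) :
    Tendsto (fun ε : ℝ => ∫ x,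
        (∑ a, X x a * partialD a (fun z => ∫ y, u y * scaled n φ ε (y - z)) x) * Ψ x)
      (𝓝[>] 0) (𝓝 (-∫ x, u x * ∑ a, partialD a (fun z => X z a * Ψ z) x)) := by
  obtain ⟨⟨hφs, hφc⟩, hφ1⟩ := hφ
  obtain ⟨hΨs, hΨc⟩ := hΨ
  have hone : (1 : WithTop ℕ∞) ≤ ((⊤ : ℕ∞) : WithTop ℕ∞) := by exact_mod_cast le_top
  have hX1 : ContDiff ℝ 1 X := hX.of_le hone
  have hΨ1 : ContDiff ℝ 1 Ψ := hΨs.of_le hone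
  have hXΨ (a : Fin n) : ContDiff ℝ 1 fun z => X z a * Ψ z := (contDiff_pi.1 hX1 a).mul hΨ1
  have hdiv : Continuous fun x => ∑ a, partialD a (fun z => X z a * Ψ z) x :=
    continuous_finsetSum _ fun a _ => continuous_partialD a (hXΨ a)
  have hdivc : HasCompactSupport fun x => ∑ a, partialD a (fun z => X z a * Ψ z) x := by
    refine HasCompactSupport.intro' hΨc.isCompact (isClosed_tsupport Ψ) fun x hx => ?_
    refine Finset.sum_eq_zero fun a _ => ?_
    have hsub : tsupport (fun z => X z a * Ψ z) ⊆ tsupport Ψ := tsupport_mul_subset_right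
    simp [partialD, fderiv_of_notMem_tsupport ℝ fun h => hx (hsub h)]
  refine (tendsto_integral_smoothing_mul hu hφs.continuous hφc hφ1 hdiv hdivc).neg.congr' ?_
  filter_upwards [self_mem_nhdsWithin] with ε (hε : 0 < ε)
  have hsmooth : ContDiff ℝ 1 fun z => ∫ y, u y * scaled n φ ε (y - z) :=
    (contDiff_smoothing hu (contDiff_scaled hφs ε)
      (hasCompactSupport_scaled hφc hε.ne')).of_le hone
  exact (integral_sum_mul_partialD_mul hsmooth hX1 hΨ1 hΨc).symm

end Colombeau
end
end
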